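/- arXiv:2312.15669 — 2 statements merged into one kernel-verified Lean document; each statement's English description precedes it below -/
import Mathlib

section
/- Let τ(n1,n2,n3,n4) be the Casoratian in the direction n1 of the vector ψ with entries ψ_j(n1,n2,n3,n4) = ρ_j^+ ∏_{i=1}^4 (a_i+k_j)^{n_i} + ρ_j^- ∏_{i=1}^4 (a_i−k_j)^{n_i}. Then τ satisfies the three doubly-reflected 4D discrete AKP equations at every point: 𝔄5 := (a2+a3)(a3−a4)(a2+a4) τ_2 τ_134 − (a1+a3)(a3−a4)(a1+a4) τ_1 τ_234 − (a1−a2)(a2+a4)(a1+a4) τ_123 τ_4 + (a1−a2)(a2+a3)(a1+a3) τ_124 τ_3 = 0; 𝔄6 := −(a2+a3)(a3+a4)(a2−a4) τ_3 τ_124 + (a1−a3)(a3+a4)(a1+a4) τ_123 τ_4 + (a1+a2)(a2−a4)(a1+a4) τ_1 τ_234 − (a1+a2)(a2+a3)(a1−a3) τ_134 τ_2 = 0; and 𝔄7 := (a2−a3)(a3+a4)(a2+a4) τ_4 τ_123 − (a1+a3)(a3+a4)(a1−a4) τ_124 τ_3 + (a1+a2)(a2+a4)(a1−a4) τ_134 τ_2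 − (a1+a2)(a2−a3)(a1+a3) τ_1 τ_234 = 0. -/
/-!
A row of a Casoratian is a sequence `u : ℕ → ℂ` (the values of `ψ_j` along direction `n1`), and
`rowShift s` is the operator `y + s`, where `y` is the unit shift along `n1`. Since
`a_i + k = (a_1 + k) + (a_i - a_1)`, shifting `n_i` forward is `rowShift (a_i - a_1)`; since
`(a_1 ± k) - (a_i + a_1) = -(a_i ∓ k)`, shifting `n_i` backward is `rowShift (-a_i - a_1)` up to
the factor `-(a_i² - k_j²)` in row `j`, which does not depend on the sign of `k_j`. So reflecting
a direction only multiplies the Casoratian by a nonzero constant.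

All three equations are therefore instances of one identity, the unreflected 4D AKP equation
`casDet_akp`, for an arbitrary array of rows: reflect the directions 3 and 4, then 2 and 4, then
2 and 3, and cancel the constants. The direction `n1` of the Casoratian is never reflected.

`casDet_akp` is a Plücker relation. The evaluation row `m ↦ (-s)^m` is the eigenvector of the
shift with eigenvalue `-s`, so it is killed by `y + s`. Bordering a Casoratian with it and clearing
columns applies `y + s` to the other rows (`casDet_cons_geom`). Hence the Casoratian of
`(y + s) u`, and a Vandermonde factor times that of `(y + s)(y + s')(y + s'') u`, are the
determinants of `u` bordered by one, respectively three, evaluation rows. Those bordered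
determinants satisfy a four-term Plücker relation (`casDet_pluecker`).
-/

/-- The determinant of the first `n` columns of an `n`-rowed array of sequences. -/
def casDet {n : ℕ} (L : Fin n → ℕ → ℂ) : ℂ := (Matrix.of fun i m : Fin n => L i m).det

/-- The operator `y + s` applied to every row, `y` being the unit shift of sequences. -/
def rowShift {n : ℕ} (s : ℂ) (L : Fin n → ℕ → ℂ) : Fin n → ℕ → ℂ :=
  fun i m => L i (m + 1) + s * L i m

/-- Multiplication of each row by its own constant. -/
def rowScale {n : ℕ} (c : Fin n → ℂ) (L : Fin n → ℕ → ℂ) : Fin n → ℕ → ℂ :=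
  fun i m => c i * L i m

/-- A multiple of the evaluation row: the sequence of powers of `-s`, times `t`. -/
def geomRow (t s : ℂ) : ℕ → ℂ := fun m => t * (-s) ^ m

lemma casDet_rowScale {n : ℕ} (c : Fin n → ℂ) (L : Fin n → ℕ → ℂ) :
    casDet (rowScale c L) = (∏ j, c j) * casDet L :=
  Matrix.det_mul_column c (Matrix.of fun i m : Fin n => L i m)

lemma rowShift_rowScale {n : ℕ} (s : ℂ) (c : Fin n → ℂ) (L : Fin n → ℕ → ℂ) :
    rowShift s (rowScale c L) = rowScale c (rowShift s L) := by
  funext i m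
  simp only [rowShift, rowScale]
  ring

lemma rowShift_cons_geom {n : ℕ} (s t r : ℂ) (L : Fin n → ℕ → ℂ) :
    rowShift s (Fin.cons (geomRow t r) L : Fin (n + 1) → ℕ → ℂ) =
      Fin.cons (geomRow (t * (s - r)) r) (rowShift s L) := by
  funext i m
  refine Fin.cases ?_ (fun i => ?_) i
  · simp only [rowShift, geomRow, Fin.cons_zero]
    ring
  · simp only [rowShift, Fin.cons_succ]

/-- Adding `s` times the previous column to each column turns the evaluation row into
`(t, 0, …, 0)` and applies `y + s` to the remaining rows. -/
lemma casDet_cons_geom {n : ℕ} (t s : ℂ) (L : Fin n → ℕ → ℂ) :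
    casDet (Fin.cons (geomRow t s) L : Fin (n + 1) → ℕ → ℂ) = t * casDet (rowShift s L) := by
  set w : Fin (n + 1) → ℕ → ℂ := Fin.cons (geomRow t s) L with hw
  have h : casDet w = (Matrix.of fun i m : Fin (n + 1) =>
      (Fin.cons (w i 0) (fun m' : Fin n => w i (m' + 1) + s * w i m') : Fin (n + 1) → ℂ) m).det := by
    refine Matrix.det_eq_of_forall_col_eq_smul_add_pred (fun _ => -s) (fun i => by simp)
      fun i j => ?_
    simp only [Matrix.of_apply, Fin.cons_succ, Fin.val_succ, Fin.val_castSucc]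
    ring
  rw [h, Matrix.det_succ_row_zero, Fin.sum_univ_succ, Finset.sum_eq_zero]
  · simp [hw, casDet, geomRow, rowShift, Matrix.submatrix]
  · intro m _
    have h0 : w 0 (m + 1) + s * w 0 m = 0 := by
      simp only [hw, Fin.cons_zero, geomRow]
      ring
    simp only [Matrix.of_apply, Fin.cons_succ, h0, mul_zero, zero_mul]

/-- The maximal minors of an `(n + 1) × n` array give a linear relation between its rows: the
Laplace expansion of a determinant whose column `c` is repeated. -/
lemma sum_minor_mul_row {n : ℕ} (w : Fin (n + 1) → ℕ → ℂ) (c : Fin n) :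
    ∑ i : Fin (n + 1), (-1) ^ (i : ℕ) * w i c * casDet (fun j => w (i.succAbove j)) = 0 := by
  have h : (Matrix.of fun i m : Fin (n + 1) =>
      (Fin.cons (w i c) (fun m' : Fin n => w i m') : Fin (n + 1) → ℂ) m).det = 0 :=
    Matrix.det_zero_of_column_eq (i := 0) (j := c.succ) (Fin.succ_ne_zero c).symm (by simp)
  rw [Matrix.det_succ_column_zero] at h
  rw [← h]
  refine Finset.sum_congr rfl fun i _ => ?_
  simp [casDet, Matrix.submatrix]

/-- Four-term Plücker relation. The functional `x ↦ casDet (cons x V)` is linear in the first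
`N + 1` entries of `x` and kills the rows of `V`; it is applied to the linear relation
`sum_minor_mul_row` between `e1`, `e2`, `e3`, `e4` and the rows of `V`. -/
lemma casDet_pluecker {N : ℕ} (V : Fin N → ℕ → ℂ) (e1 e2 e3 e4 : ℕ → ℂ) :
    casDet (Fin.cons e1 V : Fin (N + 1) → ℕ → ℂ) *
        casDet (Fin.cons e2 (Fin.cons e3 (Fin.cons e4 V : Fin (N + 1) → ℕ → ℂ) :
          Fin (N + 2) → ℕ → ℂ) : Fin (N + 3) → ℕ → ℂ) -
      casDet (Fin.cons e2 V : Fin (N + 1) → ℕ → ℂ) *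
        casDet (Fin.cons e1 (Fin.cons e3 (Fin.cons e4 V : Fin (N + 1) → ℕ → ℂ) :
          Fin (N + 2) → ℕ → ℂ) : Fin (N + 3) → ℕ → ℂ) +
      casDet (Fin.cons e3 V : Fin (N + 1) → ℕ → ℂ) *
        casDet (Fin.cons e1 (Fin.cons e2 (Fin.cons e4 V : Fin (N + 1) → ℕ → ℂ) :
          Fin (N + 2) → ℕ → ℂ) : Fin (N + 3) → ℕ → ℂ) -
      casDet (Fin.cons e4 V : Fin (N + 1) → ℕ → ℂ) *
        casDet (Fin.cons e1 (Fin.cons e2 (Fin.cons e3 V : Fin (N + 1) → ℕ → ℂ) :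
          Fin (N + 2) → ℕ → ℂ) : Fin (N + 3) → ℕ → ℂ) = 0 := by
  set w : Fin (N + 4) → ℕ → ℂ := Fin.cons e1 (Fin.cons e2 (Fin.cons e3
    (Fin.cons e4 V : Fin (N + 1) → ℕ → ℂ) : Fin (N + 2) → ℕ → ℂ) : Fin (N + 3) → ℕ → ℂ) with hw
  obtain ⟨φ, hφ⟩ : ∃ φ : Fin (N + 1) → ℂ, ∀ x : ℕ → ℂ,
      casDet (Fin.cons x V : Fin (N + 1) → ℕ → ℂ) = ∑ c : Fin (N + 1), φ c * x c := by
    refine ⟨fun c => (-1) ^ (c : ℕ) * (Matrix.of fun i m : Fin N => V i (c.succAbove m)).det,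
      fun x => ?_⟩
    rw [casDet, Matrix.det_succ_row_zero]
    refine Finset.sum_congr rfl fun c _ => ?_
    simp only [Matrix.of_apply, Fin.cons_zero, Matrix.submatrix]
    simp only [Fin.cons_succ]
    ring
  have hV : ∀ j, casDet (Fin.cons (V j) V : Fin (N + 1) → ℕ → ℂ) = 0 := fun j =>
    Matrix.det_zero_of_row_eq (i := 0) (j := j.succ) (Fin.succ_ne_zero j).symm (by
      funext m; simp)
  have key : ∑ i : Fin (N + 4), (-1) ^ (i : ℕ) * casDet (Fin.cons (w i) V : Fin (N + 1) → ℕ → ℂ) *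
      casDet (fun j => w (i.succAbove j)) = 0 := by
    have h : ∀ c : Fin (N + 1), ∑ i : Fin (N + 4),
        φ c * ((-1) ^ (i : ℕ) * w i c * casDet (fun j => w (i.succAbove j))) = 0 := fun c => by
      rw [← Finset.mul_sum]
      have := sum_minor_mul_row w (Fin.castLE (by omega) c : Fin (N + 3))
      rw [Fin.val_castLE] at this
      rw [this, mul_zero]
    rw [← Finset.sum_eq_zero (fun c (_ : c ∈ Finset.univ) => h c), Finset.sum_comm]
    refine Finset.sum_congr rfl fun i _ => ?_
    rw [hφ, Finset.mul_sum, Finset.sum_mul]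
    exact Finset.sum_congr rfl fun c _ => by ring
  have w1 : (fun j => w ((0 : Fin (N + 4)).succAbove j)) =
      Fin.cons e2 (Fin.cons e3 (Fin.cons e4 V : Fin (N + 1) → ℕ → ℂ) : Fin (N + 2) → ℕ → ℂ) := by
    funext j
    simp [hw]
  have w2 : (fun j => w ((Fin.succ 0 : Fin (N + 4)).succAbove j)) =
      Fin.cons e1 (Fin.cons e3 (Fin.cons e4 V : Fin (N + 1) → ℕ → ℂ) : Fin (N + 2) → ℕ → ℂ) := by
    funext j
    refine Fin.cases ?_ (fun j => ?_) j
    · simp only [hw, Fin.succ_succAbove_zero, Fin.cons_zero]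
    · simp only [hw, Fin.succ_succAbove_succ, Fin.zero_succAbove, Fin.cons_succ]
  have w3 : (fun j => w ((Fin.succ (Fin.succ 0) : Fin (N + 4)).succAbove j)) =
      Fin.cons e1 (Fin.cons e2 (Fin.cons e4 V : Fin (N + 1) → ℕ → ℂ) : Fin (N + 2) → ℕ → ℂ) := by
    funext j
    refine Fin.cases ?_ (fun j => Fin.cases ?_ (fun j => ?_) j) j
    · simp only [hw, Fin.succ_succAbove_zero, Fin.cons_zero]
    · simp only [hw, Fin.succ_succAbove_succ, Fin.succ_succAbove_zero, Fin.cons_succ, Fin.cons_zero]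
    · simp only [hw, Fin.succ_succAbove_succ, Fin.zero_succAbove, Fin.cons_succ]
  have w4 : (fun j => w ((Fin.succ (Fin.succ (Fin.succ 0)) : Fin (N + 4)).succAbove j)) =
      Fin.cons e1 (Fin.cons e2 (Fin.cons e3 V : Fin (N + 1) → ℕ → ℂ) : Fin (N + 2) → ℕ → ℂ) := by
    funext j
    refine Fin.cases ?_ (fun j => Fin.cases ?_ (fun j => Fin.cases ?_ (fun j => ?_) j) j) j
    · simp only [hw, Fin.succ_succAbove_zero, Fin.cons_zero]
    · simp only [hw, Fin.succ_succAbove_succ, Fin.succ_succAbove_zero, Fin.cons_succ, Fin.cons_zero]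
    · simp only [hw, Fin.succ_succAbove_succ, Fin.succ_succAbove_zero, Fin.cons_succ, Fin.cons_zero]
    · simp only [hw, Fin.succ_succAbove_succ, Fin.zero_succAbove, Fin.cons_succ]
  rw [Fin.sum_univ_succ, Fin.sum_univ_succ, Fin.sum_univ_succ, Fin.sum_univ_succ,
    Finset.sum_eq_zero (fun j _ => by simp only [hw, Fin.cons_succ, hV, mul_zero, zero_mul]),
    w1, w2, w3, w4] at key
  simp only [hw, Fin.cons_succ, Fin.cons_zero, Fin.val_succ, Fin.val_zero] at key
  linear_combination key

/-- The 4D discrete AKP equation for arbitrary rows, with `y + s_i` as the shift in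
direction `i`. -/
lemma casDet_akp {N : ℕ} (u : Fin N → ℕ → ℂ) (s1 s2 s3 s4 : ℂ) :
    (s2 - s3) * (s2 - s4) * (s3 - s4) * casDet (rowShift s1 u) *
        casDet (rowShift s4 (rowShift s3 (rowShift s2 u))) -
      (s1 - s3) * (s1 - s4) * (s3 - s4) * casDet (rowShift s2 u) *
        casDet (rowShift s4 (rowShift s3 (rowShift s1 u))) +
      (s1 - s2) * (s1 - s4) * (s2 - s4) * casDet (rowShift s3 u) *
        casDet (rowShift s4 (rowShift s2 (rowShift s1 u))) -
      (s1 - s2) * (s1 - s3) * (s2 - s3) * casDet (rowShift s4 u) *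
        casDet (rowShift s3 (rowShift s2 (rowShift s1 u))) = 0 := by
  have h := casDet_pluecker u (geomRow 1 s1) (geomRow 1 s2) (geomRow 1 s3) (geomRow 1 s4)
  simp only [casDet_cons_geom, rowShift_cons_geom] at h
  linear_combination h

theorem stmt_16 (N : ℕ) (hN : 1 ≤ N) (a1 a2 a3 a4 : ℂ) (k ρp ρm : Fin N → ℂ)
    (ha1 : ∀ j, a1 + k j ≠ 0) (ha1' : ∀ j, a1 - k j ≠ 0)
    (ha2 : ∀ j, a2 + k j ≠ 0) (ha2' : ∀ j, a2 - k j ≠ 0)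
    (ha3 : ∀ j, a3 + k j ≠ 0) (ha3' : ∀ j, a3 - k j ≠ 0)
    (ha4 : ∀ j, a4 + k j ≠ 0) (ha4' : ∀ j, a4 - k j ≠ 0)
    (ψ : Fin N → ℤ → ℤ → ℤ → ℤ → ℂ)
    (hψ : ∀ j n1 n2 n3 n4, ψ j n1 n2 n3 n4 =
      ρp j * (a1 + k j) ^ n1 * (a2 + k j) ^ n2 * (a3 + k j) ^ n3 * (a4 + k j) ^ n4 +
      ρm j * (a1 - k j) ^ n1 * (a2 - k j) ^ n2 * (a3 - k j) ^ n3 * (a4 - k j) ^ n4)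
    (τ : ℤ → ℤ → ℤ → ℤ → ℂ)
    (hτ : ∀ n1 n2 n3 n4, τ n1 n2 n3 n4 =
      (Matrix.of fun j m : Fin N => ψ j (n1 + (m.1 : ℤ)) n2 n3 n4).det) :
    ∀ n1 n2 n3 n4 : ℤ,
      ((a2 + a3) * (a3 - a4) * (a2 + a4) * τ n1 (n2 + 1) n3 n4 * τ (n1 + 1) n2 (n3 + 1) (n4 + 1) -
        (a1 + a3) * (a3 - a4) * (a1 + a4) * τ (n1 + 1) n2 n3 n4 * τ n1 (n2 + 1) (n3 + 1) (n4 + 1) -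
        (a1 - a2) * (a2 + a4) * (a1 + a4) * τ (n1 + 1) (n2 + 1) (n3 + 1) n4 * τ n1 n2 n3 (n4 + 1) +
        (a1 - a2) * (a2 + a3) * (a1 + a3) * τ (n1 + 1) (n2 + 1) n3 (n4 + 1) * τ n1 n2 (n3 + 1) n4 = 0) ∧
      (-((a2 + a3) * (a3 + a4) * (a2 - a4)) * τ n1 n2 (n3 + 1) n4 * τ (n1 + 1) (n2 + 1) n3 (n4 + 1) +
        (a1 - a3) * (a3 + a4) * (a1 + a4) * τ (n1 + 1) (n2 + 1) (n3 + 1) n4 * τ n1 n2 n3 (n4 + 1) +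
        (a1 + a2) * (a2 - a4) * (a1 + a4) * τ (n1 + 1) n2 n3 n4 * τ n1 (n2 + 1) (n3 + 1) (n4 + 1) -
        (a1 + a2) * (a2 + a3) * (a1 - a3) * τ (n1 + 1) n2 (n3 + 1) (n4 + 1) * τ n1 (n2 + 1) n3 n4 = 0) ∧
      ((a2 - a3) * (a3 + a4) * (a2 + a4) * τ n1 n2 n3 (n4 + 1) * τ (n1 + 1) (n2 + 1) (n3 + 1) n4 -
        (a1 + a3) * (a3 + a4) * (a1 - a4) * τ (n1 + 1) (n2 + 1) n3 (n4 + 1) * τ n1 n2 (n3 + 1) n4 +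
        (a1 + a2) * (a2 + a4) * (a1 - a4) * τ (n1 + 1) n2 (n3 + 1) (n4 + 1) * τ n1 (n2 + 1) n3 n4 -
        (a1 + a2) * (a2 - a3) * (a1 + a3) * τ (n1 + 1) n2 n3 n4 * τ n1 (n2 + 1) (n3 + 1) (n4 + 1) = 0) := by
  intro n1 n2 n3 n4
  let Ψ : ℤ → ℤ → ℤ → ℤ → Fin N → ℕ → ℂ := fun n1 n2 n3 n4 j m => ψ j (n1 + (m : ℤ)) n2 n3 n4
  have hT : ∀ n1 n2 n3 n4, casDet (Ψ n1 n2 n3 n4) = τ n1 n2 n3 n4 :=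
    fun _ _ _ _ => (hτ _ _ _ _).symm
  have up1 : ∀ n1 n2 n3 n4, rowShift 0 (Ψ n1 n2 n3 n4) = Ψ (n1 + 1) n2 n3 n4 := by
    intro n1 n2 n3 n4
    funext j m
    simp only [rowShift, Ψ, Nat.cast_add, Nat.cast_one, zero_mul, add_zero]
    congr 1
    ring
  have up2 : ∀ n1 n2 n3 n4,
      rowShift (a2 - a1) (Ψ n1 n2 n3 n4) = Ψ n1 (n2 + 1) n3 n4 := by
    intro n1 n2 n3 n4
    funext j m
    simp only [rowShift, Ψ, Nat.cast_add, Nat.cast_one, ← add_assoc, hψ, zpow_add_one₀ (ha1 j),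
      zpow_add_one₀ (ha1' j), zpow_add_one₀ (ha2 j), zpow_add_one₀ (ha2' j)]
    ring
  have up3 : ∀ n1 n2 n3 n4,
      rowShift (a3 - a1) (Ψ n1 n2 n3 n4) = Ψ n1 n2 (n3 + 1) n4 := by
    intro n1 n2 n3 n4
    funext j m
    simp only [rowShift, Ψ, Nat.cast_add, Nat.cast_one, ← add_assoc, hψ, zpow_add_one₀ (ha1 j),
      zpow_add_one₀ (ha1' j), zpow_add_one₀ (ha3 j), zpow_add_one₀ (ha3' j)]
    ring
  have up4 : ∀ n1 n2 n3 n4,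
      rowShift (a4 - a1) (Ψ n1 n2 n3 n4) = Ψ n1 n2 n3 (n4 + 1) := by
    intro n1 n2 n3 n4
    funext j m
    simp only [rowShift, Ψ, Nat.cast_add, Nat.cast_one, ← add_assoc, hψ, zpow_add_one₀ (ha1 j),
      zpow_add_one₀ (ha1' j), zpow_add_one₀ (ha4 j), zpow_add_one₀ (ha4' j)]
    ring
  have down2 : ∀ n1 n2 n3 n4, rowShift (-a2 - a1) (Ψ n1 (n2 + 1) n3 n4) =
      rowScale (fun j => -((a2 + k j) * (a2 - k j))) (Ψ n1 n2 n3 n4) := by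
    intro n1 n2 n3 n4
    funext j m
    simp only [rowShift, rowScale, Ψ, Nat.cast_add, Nat.cast_one, ← add_assoc, hψ,
      zpow_add_one₀ (ha1 j), zpow_add_one₀ (ha1' j), zpow_add_one₀ (ha2 j),
      zpow_add_one₀ (ha2' j)]
    ring
  have down3 : ∀ n1 n2 n3 n4, rowShift (-a3 - a1) (Ψ n1 n2 (n3 + 1) n4) =
      rowScale (fun j => -((a3 + k j) * (a3 - k j))) (Ψ n1 n2 n3 n4) := by
    intro n1 n2 n3 n4
    funext j m
    simp only [rowShift, rowScale, Ψ, Nat.cast_add, Nat.cast_one, ← add_assoc, hψ,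
      zpow_add_one₀ (ha1 j), zpow_add_one₀ (ha1' j), zpow_add_one₀ (ha3 j),
      zpow_add_one₀ (ha3' j)]
    ring
  have down4 : ∀ n1 n2 n3 n4, rowShift (-a4 - a1) (Ψ n1 n2 n3 (n4 + 1)) =
      rowScale (fun j => -((a4 + k j) * (a4 - k j))) (Ψ n1 n2 n3 n4) := by
    intro n1 n2 n3 n4
    funext j m
    simp only [rowShift, rowScale, Ψ, Nat.cast_add, Nat.cast_one, ← add_assoc, hψ,
      zpow_add_one₀ (ha1 j), zpow_add_one₀ (ha1' j), zpow_add_one₀ (ha4 j),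
      zpow_add_one₀ (ha4' j)]
    ring
  have hG : ∀ a : ℂ, (∀ j, a + k j ≠ 0) → (∀ j, a - k j ≠ 0) →
      ∏ j, -((a + k j) * (a - k j)) ≠ 0 := fun a h h' =>
    Finset.prod_ne_zero_iff.2 fun j _ => neg_ne_zero.2 (mul_ne_zero (h j) (h' j))
  have hG2 := hG a2 ha2 ha2'
  have hG3 := hG a3 ha3 ha3'
  have hG4 := hG a4 ha4 ha4'
  refine ⟨?_, ?_, ?_⟩
  · have h := casDet_akp (Ψ n1 n2 (n3 + 1) (n4 + 1)) 0 (a2 - a1) (-a3 - a1) (-a4 - a1)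
    simp only [up1, up2, down3, down4, rowShift_rowScale, casDet_rowScale, hT] at h
    refine (mul_eq_zero.1 ?_).resolve_left (mul_ne_zero hG3 hG4)
    linear_combination (-1) * h
  · have h := casDet_akp (Ψ n1 (n2 + 1) n3 (n4 + 1)) 0 (-a2 - a1) (a3 - a1) (-a4 - a1)
    simp only [up1, up3, down2, down4, rowShift_rowScale, casDet_rowScale, hT] at h
    refine (mul_eq_zero.1 ?_).resolve_left (mul_ne_zero hG2 hG4)
    linear_combination (-1) * h
  · have h := casDet_akp (Ψ n1 (n2 + 1) (n3 + 1) n4) 0 (-a2 - a1) (-a3 - a1) (a4 - a1)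
    simp only [up1, up4, down2, down3, rowShift_rowScale, casDet_rowScale, hT] at h
    refine (mul_eq_zero.1 ?_).resolve_left (mul_ne_zero hG2 hG3)
    linear_combination (-1) * h
end

section
/- Let τ(n1,n2,n3,n5) be the Casoratian in the direction n1 of the vector ψ with entries ψ_j(n1,n2,n3,n5) = ρ_j^+ (a1+k_j)^{n1}(a2+k_j)^{n2}(a3+k_j)^{n3}(a5+k_j)^{n5} + ρ_j^- (a1−k_j)^{n1}(a2−k_j)^{n2}(a3−k_j)^{n3}(a5−k_j)^{n5}. Then τ satisfies, at every point, the three 8-point equations: M1' := (a1+a3)(a1+a5)(a2−a3) τ_1^3 τ_235 − (a1−a2)(a1−a3)(a2−a3) τ^3 τ_1235 − (a1−a3)(a2+a3)(a2+a5) τ_2^3 τ_135 + 2a3(a1−a2)(a3+a5) τ τ_125 = 0; M2' := (a1−a3)(a1+a5)(a2+a3) τ_13 τ_25^3 − (a1−a2)(a1+a3)(a2+a3) τ_3 τ_125^3 − (a1+a3)(a2−a3)(a2+a5) τ_23 τ_15^3 + 2a3(a1−a2)(a3−a5) τ τ_125 = 0; and the 8-point 3-dimensional equation Ȧ := (a2−a3)(a1+a3)²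 τ_1^3 τ_233 − (a1−a2)(a1−a3)(a2−a3) τ^3 τ_1233 − (a1−a3)(a2+a3)² τ_2^3 τ_133 + 4a3²(a1−a2) τ τ_123 = 0. -/
/-!
After absorbing the base point, the `j`-th row of the Casoratian is the moment sequence
`m ↦ w_j (t ^ m)` of a linear functional `w_j` on polynomials in `t = a1 + k`.
A forward shift in `n_i` replaces `w_j` by `p ↦ w_j ((t + (a_i - a1)) p)`. Since
`(a_i + k)⁻¹ = (a_i - k) / (a_i ^ 2 - k ^ 2)`, a backward shift replaces it, up to the row factor
`-(a_i ^ 2 - k ^ 2)`, by `p ↦ w_j ((t - a_i - a1) p)`. So every `τ` that occurs is, up to such row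
factors, a bracket `[Q] = det (w_j (Q t ^ m))` with `Q` a product of linear factors.

All three equations are instances of one four-term relation between brackets (`bracket_relation`),
in which `x, b, …` stand for the linear factors `t + x, t + b, …`:

`(x-y)(x-z)(y-z) [b b'] [x y z] - (b-x)(b'-x)(y-z) [b b' x] [y z]`
`  + (b-y)(b'-y)(x-z) [b b' y] [x z] - (b-z)(b'-z)(x-y) [b b' z] [x y] = 0`.

It is a Plücker relation (`plucker`): evaluations at `-x`, `-y`, `-z` and the top coefficient
functional are added as extra rows to the `w_j`, giving `N + 4` vectors in dimension `N + 3`, and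
the linear form `v ↦ det (v, w_1, …, w_N)`, with all entries first multiplied by `(t + b)(t + b')`,
is applied to their linear dependency; it kills the `w_j`. The lemmas
`momentDet_evalSeq` and `momentDet_topSeq` remove the extra rows.

With `x = 0` and `y = a2 - a1`, the equation `M1'` is the case `z = a3 - a1`, `b = -a3 - a1`,
`b' = -a5 - a1`; `M2'` is obtained from it by `a3 ↦ -a3`,
and `Ȧ` by replacing the direction `n5` by a second copy of `n3`.
-/

namespace Casoratian

open Matrix

/-- The determinant of the first `n` moments of `n` functionals on polynomials, a functional being
encoded by its moment sequence `m ↦ u (t ^ m)`. -/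
def momentDet {n : ℕ} (U : Fin n → ℕ → ℂ) : ℂ := (of fun i m : Fin n => U i m.1).det

/-- The moment sequence of `p ↦ u ((t + x) p)`. -/
def mulSeq (x : ℂ) (u : ℕ → ℂ) : ℕ → ℂ := fun m => u (m + 1) + x * u m

/-- `mulSeq x` applied to each functional of a family. -/
def mulFam {n : ℕ} (x : ℂ) (U : Fin n → ℕ → ℂ) : Fin n → ℕ → ℂ := fun i => mulSeq x (U i)

/-- The moment sequence of evaluation at `-x`, the root of `t + x`. -/
def evalSeq (x : ℂ) : ℕ → ℂ := fun m => (-x) ^ m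

/-- The moment sequence of the functional extracting the coefficient of `t ^ n`. -/
def topSeq (n : ℕ) : ℕ → ℂ := fun m => if m = n then 1 else 0

/-- The Plücker relation: the alternating sum of `n + 1` vectors in dimension `n`, weighted by their
complementary minors, vanishes after applying any linear form. -/
lemma plucker {n : ℕ} (f : (Fin n → ℂ) →ₗ[ℂ] ℂ) (B : Fin (n + 1) → Fin n → ℂ) :
    ∑ i : Fin (n + 1), (-1) ^ (i : ℕ) * f (B i) * (of fun r c => B (i.succAbove r) c).det = 0 := by
  -- the sum is the expansion of a determinant whose column `0` depends on the others
  let A : Matrix (Fin (n + 1)) (Fin (n + 1)) ℂ := of fun i => Fin.cons (f (B i)) (B i)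
  have hA : A.det = 0 := by
    rw [← exists_mulVec_eq_zero_iff]
    refine ⟨Fin.cons (-1) fun c => f (fun j => if c = j then 1 else 0), ?_, ?_⟩
    · intro h
      have := congrFun h 0
      simp at this
    · ext i
      have := LinearMap.pi_apply_eq_sum_univ f (B i)
      simp [A, mulVec, dotProduct, Fin.sum_univ_succ]
      rw [this]
      simp
  rw [det_succ_column_zero] at hA
  exact hA

lemma mulFam_cons {n : ℕ} (x : ℂ) (u : ℕ → ℂ) (U : Fin n → ℕ → ℂ) :
    mulFam x (Fin.cons u U : Fin (n + 1) → ℕ → ℂ) = Fin.cons (mulSeq x u) (mulFam x U) := by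
  funext i
  refine Fin.cases ?_ (fun i => ?_) i <;> simp [mulFam]

lemma mulSeq_evalSeq (x y : ℂ) : mulSeq x (evalSeq y) = (x - y) • evalSeq y := by
  funext m; simp only [mulSeq, evalSeq, Pi.smul_apply, smul_eq_mul]; ring

lemma mulSeq_smul (x c : ℂ) (u : ℕ → ℂ) : mulSeq x (c • u) = c • mulSeq x u := by
  funext m; simp only [mulSeq, Pi.smul_apply, smul_eq_mul]; ring

lemma momentDet_scale {n : ℕ} (c : Fin n → ℂ) (U : Fin n → ℕ → ℂ) :
    momentDet (fun i m => c i * U i m) = (∏ i, c i) * momentDet U :=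
  det_mul_column c (of fun i m : Fin n => U i m.1)

lemma mulFam_scale {n : ℕ} (x : ℂ) (c : Fin n → ℂ) (U : Fin n → ℕ → ℂ) :
    mulFam x (fun i m => c i * U i m) = fun i m => c i * mulFam x U i m := by
  funext i m; simp only [mulFam, mulSeq]; ring

lemma momentDet_cons_smul {n : ℕ} (c : ℂ) (u : ℕ → ℂ) (U : Fin n → ℕ → ℂ) :
    momentDet (Fin.cons (c • u) U : Fin (n + 1) → ℕ → ℂ)
      = c * momentDet (Fin.cons u U : Fin (n + 1) → ℕ → ℂ) := by
  have h := momentDet_scale (Fin.cons c fun _ => 1 : Fin (n + 1) → ℂ)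
    (Fin.cons u U : Fin (n + 1) → ℕ → ℂ)
  rw [Fin.prod_univ_succ] at h
  simp only [Fin.cons_zero, Fin.cons_succ, Finset.prod_const_one, mul_one] at h
  rw [← h]
  congr 1
  funext i
  refine Fin.cases ?_ (fun i => ?_) i <;> funext m <;> simp

/-- A determinant sees only the first `n` moments. -/
lemma momentDet_congr {n : ℕ} {U V : Fin n → ℕ → ℂ} (h : ∀ i, ∀ m < n, U i m = V i m) :
    momentDet U = momentDet V := by
  unfold momentDet
  congr 1
  ext i m
  exact h i m m.2

/-- Adding to each column `x` times the previous one turns the evaluation row into `(1, 0, …, 0)`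
and multiplies the other functionals by `t + x`. -/
lemma momentDet_evalSeq {n : ℕ} (x : ℂ) (U : Fin n → ℕ → ℂ) :
    momentDet (Fin.cons (evalSeq x) U : Fin (n + 1) → ℕ → ℂ) = momentDet (mulFam x U) := by
  set V : Fin (n + 1) → ℕ → ℂ := Fin.cons (evalSeq x) U with hV
  let B : Matrix (Fin (n + 1)) (Fin (n + 1)) ℂ :=
    of fun i => Fin.cons (V i 0) fun m : Fin n => mulSeq x (V i) m
  have h : momentDet V = B.det := by
    refine det_eq_of_forall_col_eq_smul_add_pred (fun _ => -x) ?_ ?_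
    · intro i; simp [B]
    · intro i j
      simp [B, mulSeq]
  rw [h, det_succ_row_zero, Fin.sum_univ_succ, Finset.sum_eq_zero]
  · simp [B, hV, evalSeq, momentDet, submatrix, mulFam]
  · intro j _
    have : B 0 j.succ = 0 := by
      simp [B, hV, mulSeq_evalSeq]
    rw [this]; simp

lemma momentDet_topSeq {n : ℕ} (U : Fin n → ℕ → ℂ) :
    momentDet (Fin.cons (topSeq n) U : Fin (n + 1) → ℕ → ℂ) = (-1) ^ n * momentDet U := by
  rw [momentDet, det_succ_row_zero, Fin.sum_univ_castSucc, Finset.sum_eq_zero]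
  · simp [topSeq, momentDet, submatrix]
  · intro j _
    have : (j : ℕ) ≠ n := j.2.ne
    simp [topSeq, this]

/-- The linear form `u ↦ det ((t + b)(t + b') u, W)` depends only on the first `n + 3` moments
of `u`. -/
lemma exists_form {n : ℕ} (b b' : ℂ) (W : Fin n → ℕ → ℂ) :
    ∃ f : (Fin (n + 3) → ℂ) →ₗ[ℂ] ℂ, ∀ u : ℕ → ℂ, f (fun m => u m) =
      momentDet (Fin.cons (mulSeq b (mulSeq b' u)) W : Fin (n + 1) → ℕ → ℂ) := by
  let L : (Fin (n + 3) → ℂ) →ₗ[ℂ] (Fin (n + 1) → ℂ) :=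
    { toFun := fun v m => v ⟨m + 2, by omega⟩ + b' * v ⟨m + 1, by omega⟩
        + b * (v ⟨m + 1, by omega⟩ + b' * v ⟨m, by omega⟩)
      map_add' := by intro u v; funext m; simp only [Pi.add_apply]; ring
      map_smul' := by
        intro c v; funext m; simp only [Pi.smul_apply, smul_eq_mul, RingHom.id_apply]; ring }
  let D : (Fin (n + 1) → ℂ) →ₗ[ℂ] ℂ :=
    (detRowAlternating (n := Fin (n + 1)) (R := ℂ)).toMultilinearMap.toLinearMap
      (Fin.cons 0 fun i m => W i m) 0
  refine ⟨D ∘ₗ L, fun u => ?_⟩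
  simp only [D, LinearMap.comp_apply, MultilinearMap.toLinearMap_apply, momentDet]
  change det _ = det _
  congr 1
  ext i m
  refine Fin.cases ?_ (fun i => ?_) i <;> simp [L, mulSeq]

lemma momentDet_evalSeq₃ {n : ℕ} (x y z : ℂ) (W : Fin n → ℕ → ℂ) :
    momentDet (Fin.cons (evalSeq x) (Fin.cons (evalSeq y) (Fin.cons (evalSeq z) W :
      Fin (n + 1) → ℕ → ℂ) : Fin (n + 2) → ℕ → ℂ) : Fin (n + 3) → ℕ → ℂ)
      = (x - y) * (x - z) * (y - z) * momentDet (mulFam z (mulFam y (mulFam x W))) := by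
  simp only [momentDet_evalSeq, mulFam_cons, mulSeq_evalSeq, momentDet_cons_smul, mulSeq_smul]
  ring

lemma momentDet_topSeq_evalSeq₂ {n : ℕ} (y z : ℂ) (W : Fin n → ℕ → ℂ) :
    momentDet (Fin.cons (topSeq (n + 2)) (Fin.cons (evalSeq y) (Fin.cons (evalSeq z) W :
      Fin (n + 1) → ℕ → ℂ) : Fin (n + 2) → ℕ → ℂ) : Fin (n + 3) → ℕ → ℂ)
      = (-1) ^ n * (y - z) * momentDet (mulFam z (mulFam y W)) := by
  simp only [momentDet_topSeq, momentDet_evalSeq, mulFam_cons, mulSeq_evalSeq, momentDet_cons_smul]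
  ring

lemma momentDet_mul_evalSeq {n : ℕ} (b b' x : ℂ) (W : Fin n → ℕ → ℂ) :
    momentDet (Fin.cons (mulSeq b (mulSeq b' (evalSeq x))) W : Fin (n + 1) → ℕ → ℂ)
      = (b - x) * (b' - x) * momentDet (mulFam x W) := by
  simp only [momentDet_evalSeq, mulSeq_evalSeq, momentDet_cons_smul, mulSeq_smul]
  ring

/-- On polynomials of degree at most `n`, multiplication by `(t + b)(t + b')` turns the coefficient
of `t ^ (n + 2)` into that of `t ^ n`. -/
lemma momentDet_mul_topSeq {n : ℕ} (b b' : ℂ) (W : Fin n → ℕ → ℂ) :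
    momentDet (Fin.cons (mulSeq b (mulSeq b' (topSeq (n + 2)))) W : Fin (n + 1) → ℕ → ℂ)
      = (-1) ^ n * momentDet W := by
  rw [← momentDet_topSeq]
  refine momentDet_congr fun i m hm => ?_
  refine Fin.cases ?_ (fun i => ?_) i
  · have h1 : m + 1 ≠ n + 2 := by omega
    have h2 : m ≠ n + 2 := by omega
    have h3 : m ≠ n + 1 := by omega
    simp [mulSeq, topSeq, h2, h3]
  · simp

/-- The four-term bracket relation, which contains all three equations. -/
lemma bracket_relation {n : ℕ} (b b' x y z : ℂ) (W : Fin n → ℕ → ℂ) :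
    (x - y) * (x - z) * (y - z) *
        momentDet (mulFam b (mulFam b' W)) * momentDet (mulFam z (mulFam y (mulFam x W))) -
      (b - x) * (b' - x) * (y - z) *
        momentDet (mulFam x (mulFam b (mulFam b' W))) * momentDet (mulFam z (mulFam y W)) +
      (b - y) * (b' - y) * (x - z) *
        momentDet (mulFam y (mulFam b (mulFam b' W))) * momentDet (mulFam z (mulFam x W)) -
      (b - z) * (b' - z) * (x - y) *
        momentDet (mulFam z (mulFam b (mulFam b' W))) * momentDet (mulFam y (mulFam x W)) = 0 := by
  obtain ⟨f, hf⟩ := exists_form b b' (mulFam b (mulFam b' W))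
  let B : Fin (n + 4) → ℕ → ℂ := Fin.cons (topSeq (n + 2)) (Fin.cons (evalSeq x)
    (Fin.cons (evalSeq y) (Fin.cons (evalSeq z) W : Fin (n + 1) → ℕ → ℂ) :
      Fin (n + 2) → ℕ → ℂ) : Fin (n + 3) → ℕ → ℂ)
  have h := plucker f (fun i m => B i m)
  have hB : ∀ i : Fin (n + 4), (of fun r c : Fin (n + 3) => B (i.succAbove r) c).det
      = momentDet (fun r => B (i.succAbove r)) := fun i => rfl
  -- the form vanishes on the original functionals because it repeats a row
  have hW : ∀ i : Fin n, f (fun m => W i m) = 0 := by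
    intro i
    rw [hf]
    refine det_zero_of_row_eq (i := 0) (j := i.succ) (Fin.succ_ne_zero i).symm ?_
    funext m
    simp [mulFam]
  have e0 : (fun r => B ((0 : Fin (n + 4)).succAbove r)) = Fin.cons (evalSeq x)
      (Fin.cons (evalSeq y) (Fin.cons (evalSeq z) W : Fin (n + 1) → ℕ → ℂ) :
        Fin (n + 2) → ℕ → ℂ) := by
    funext r; simp [B]
  have e1 : (fun r => B ((0 : Fin (n + 3)).succ.succAbove r)) = Fin.cons (topSeq (n + 2))
      (Fin.cons (evalSeq y) (Fin.cons (evalSeq z) W : Fin (n + 1) → ℕ → ℂ) :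
        Fin (n + 2) → ℕ → ℂ) := by
    funext r
    refine Fin.cases ?_ (fun r => ?_) r
    · rfl
    · simp only [Fin.succ_succAbove_succ, Fin.zero_succAbove, B, Fin.cons_succ]
  have e2 : (fun r => B ((0 : Fin (n + 2)).succ.succ.succAbove r)) = Fin.cons (topSeq (n + 2))
      (Fin.cons (evalSeq x) (Fin.cons (evalSeq z) W : Fin (n + 1) → ℕ → ℂ) :
        Fin (n + 2) → ℕ → ℂ) := by
    funext r
    refine Fin.cases ?_ (fun r => Fin.cases ?_ (fun r => ?_) r) r
    · rfl
    · rfl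
    · simp only [Fin.succ_succAbove_succ, Fin.zero_succAbove, B, Fin.cons_succ]
  have e3 : (fun r => B ((0 : Fin (n + 1)).succ.succ.succ.succAbove r)) =
      Fin.cons (topSeq (n + 2)) (Fin.cons (evalSeq x)
        (Fin.cons (evalSeq y) W : Fin (n + 1) → ℕ → ℂ) : Fin (n + 2) → ℕ → ℂ) := by
    funext r
    refine Fin.cases ?_ (fun r => Fin.cases ?_ (fun r => Fin.cases ?_ (fun r => ?_) r) r) r
    · rfl
    · rfl
    · rfl
    · simp only [Fin.succ_succAbove_succ, Fin.zero_succAbove, B, Fin.cons_succ]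
  simp only [hB] at h
  rw [Fin.sum_univ_succ, Fin.sum_univ_succ, Fin.sum_univ_succ, Fin.sum_univ_succ,
    Finset.sum_eq_zero (s := Finset.univ (α := Fin n)), e0, e1, e2, e3] at h
  · have b0 : B 0 = topSeq (n + 2) := rfl
    have b1 : B (Fin.succ 0) = evalSeq x := rfl
    have b2 : B (Fin.succ (Fin.succ 0)) = evalSeq y := rfl
    have b3 : B (Fin.succ (Fin.succ (Fin.succ 0))) = evalSeq z := rfl
    rw [b0, b1, b2, b3] at h
    simp only [hf, momentDet_evalSeq₃, momentDet_topSeq_evalSeq₂, momentDet_mul_evalSeq,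
      momentDet_mul_topSeq, Fin.val_succ, Fin.val_zero] at h
    -- each product of two brackets carries exactly one factor `(-1) ^ n`
    have hs : ((-1 : ℂ) ^ n) ≠ 0 := pow_ne_zero _ (by norm_num)
    refine mul_left_cancel₀ hs ?_
    linear_combination h
  · intro i _
    have : B i.succ.succ.succ.succ = W i := rfl
    rw [this, hW]; ring

end Casoratian

open Casoratian

/-- The Casoratian (in direction `n1`) with variables `(n1,n2,n3,n5)` satisfies the
8-point equations `M1' = 0`, `M2' = 0` and the 8-point 3-dimensional equation `Ȧ = 0`. -/
theorem stmt_18 (N : ℕ) (hN : 1 ≤ N) (a1 a2 a3 a5 : ℂ) (k ρp ρm : Fin N → ℂ)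
    (ha1 : ∀ j, a1 + k j ≠ 0) (ha1' : ∀ j, a1 - k j ≠ 0)
    (ha2 : ∀ j, a2 + k j ≠ 0) (ha2' : ∀ j, a2 - k j ≠ 0)
    (ha3 : ∀ j, a3 + k j ≠ 0) (ha3' : ∀ j, a3 - k j ≠ 0)
    (ha5 : ∀ j, a5 + k j ≠ 0) (ha5' : ∀ j, a5 - k j ≠ 0)
    (ψ : Fin N → ℤ → ℤ → ℤ → ℤ → ℂ)
    (hψ : ∀ j n1 n2 n3 n5, ψ j n1 n2 n3 n5 =
      ρp j * (a1 + k j) ^ n1 * (a2 + k j) ^ n2 * (a3 + k j) ^ n3 * (a5 + k j) ^ n5 +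
      ρm j * (a1 - k j) ^ n1 * (a2 - k j) ^ n2 * (a3 - k j) ^ n3 * (a5 - k j) ^ n5)
    (τ : ℤ → ℤ → ℤ → ℤ → ℂ)
    (hτ : ∀ n1 n2 n3 n5, τ n1 n2 n3 n5 =
      (Matrix.of fun j m : Fin N => ψ j (n1 + (m.1 : ℤ)) n2 n3 n5).det) :
    ∀ n1 n2 n3 n5 : ℤ,
      ((a1 + a3) * (a1 + a5) * (a2 - a3) *
          τ (n1 + 1) n2 (n3 - 1) n5 * τ n1 (n2 + 1) (n3 + 1) (n5 + 1) -
        (a1 - a2) * (a1 - a3) * (a2 - a3) *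
          τ n1 n2 (n3 - 1) n5 * τ (n1 + 1) (n2 + 1) (n3 + 1) (n5 + 1) -
        (a1 - a3) * (a2 + a3) * (a2 + a5) *
          τ n1 (n2 + 1) (n3 - 1) n5 * τ (n1 + 1) n2 (n3 + 1) (n5 + 1) +
        2 * a3 * (a1 - a2) * (a3 + a5) *
          τ n1 n2 n3 n5 * τ (n1 + 1) (n2 + 1) n3 (n5 + 1) = 0) ∧
      ((a1 - a3) * (a1 + a5) * (a2 + a3) *
          τ (n1 + 1) n2 (n3 + 1) n5 * τ n1 (n2 + 1) (n3 - 1) (n5 + 1) -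
        (a1 - a2) * (a1 + a3) * (a2 + a3) *
          τ n1 n2 (n3 + 1) n5 * τ (n1 + 1) (n2 + 1) (n3 - 1) (n5 + 1) -
        (a1 + a3) * (a2 - a3) * (a2 + a5) *
          τ n1 (n2 + 1) (n3 + 1) n5 * τ (n1 + 1) n2 (n3 - 1) (n5 + 1) +
        2 * a3 * (a1 - a2) * (a3 - a5) *
          τ n1 n2 n3 n5 * τ (n1 + 1) (n2 + 1) n3 (n5 + 1) = 0) ∧
      ((a2 - a3) * (a1 + a3) ^ 2 *
          τ (n1 + 1) n2 (n3 - 1) n5 * τ n1 (n2 + 1) (n3 + 2) n5 -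
        (a1 - a2) * (a1 - a3) * (a2 - a3) *
          τ n1 n2 (n3 - 1) n5 * τ (n1 + 1) (n2 + 1) (n3 + 2) n5 -
        (a1 - a3) * (a2 + a3) ^ 2 *
          τ n1 (n2 + 1) (n3 - 1) n5 * τ (n1 + 1) n2 (n3 + 2) n5 +
        4 * a3 ^ 2 * (a1 - a2) *
          τ n1 n2 n3 n5 * τ (n1 + 1) (n2 + 1) (n3 + 1) n5 = 0) := by
    -- rows of the Casoratian as moment sequences, and the effect of the shifts on them
  let Ψ : ℤ → ℤ → ℤ → ℤ → Fin N → ℕ → ℂ := fun n1 n2 n3 n5 j m => ψ j (n1 + m) n2 n3 n5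
  have hΨ : ∀ n1 n2 n3 n5, τ n1 n2 n3 n5 = momentDet (Ψ n1 n2 n3 n5) := hτ
  have s1 : ∀ n1 n2 n3 n5, mulFam 0 (Ψ n1 n2 n3 n5) = Ψ (n1 + 1) n2 n3 n5 := by
    intro n1 n2 n3 n5
    funext j m
    simp only [mulFam, mulSeq, Ψ, zero_mul, add_zero, Nat.cast_add, Nat.cast_one]
    congr 1; ring
  have s2 : ∀ n1 n2 n3 n5, mulFam (a2 - a1) (Ψ n1 n2 n3 n5) = Ψ n1 (n2 + 1) n3 n5 := by
    intro n1 n2 n3 n5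
    funext j m
    simp only [mulFam, mulSeq, Ψ, Nat.cast_add, Nat.cast_one, hψ, ← add_assoc,
      zpow_add_one₀ (ha1 j), zpow_add_one₀ (ha1' j), zpow_add_one₀ (ha2 j), zpow_add_one₀ (ha2' j)]
    ring
  have s3 : ∀ n1 n2 n3 n5, mulFam (a3 - a1) (Ψ n1 n2 n3 n5) = Ψ n1 n2 (n3 + 1) n5 := by
    intro n1 n2 n3 n5
    funext j m
    simp only [mulFam, mulSeq, Ψ, Nat.cast_add, Nat.cast_one, hψ, ← add_assoc,
      zpow_add_one₀ (ha1 j), zpow_add_one₀ (ha1' j), zpow_add_one₀ (ha3 j), zpow_add_one₀ (ha3' j)]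
    ring
  have r3 : ∀ n1 n2 n3 n5, mulFam (-a3 - a1) (Ψ n1 n2 (n3 + 1) n5) =
      fun j m => (-((a3 + k j) * (a3 - k j))) * Ψ n1 n2 n3 n5 j m := by
    intro n1 n2 n3 n5
    funext j m
    simp only [mulFam, mulSeq, Ψ, Nat.cast_add, Nat.cast_one, hψ, ← add_assoc,
      zpow_add_one₀ (ha1 j), zpow_add_one₀ (ha1' j), zpow_add_one₀ (ha3 j), zpow_add_one₀ (ha3' j)]
    ring
  have r5 : ∀ n1 n2 n3 n5, mulFam (-a5 - a1) (Ψ n1 n2 n3 (n5 + 1)) =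
      fun j m => (-((a5 + k j) * (a5 - k j))) * Ψ n1 n2 n3 n5 j m := by
    intro n1 n2 n3 n5
    funext j m
    simp only [mulFam, mulSeq, Ψ, Nat.cast_add, Nat.cast_one, hψ, ← add_assoc,
      zpow_add_one₀ (ha1 j), zpow_add_one₀ (ha1' j), zpow_add_one₀ (ha5 j), zpow_add_one₀ (ha5' j)]
    ring
  have c3 : ∏ j, (-((a3 + k j) * (a3 - k j))) ≠ 0 :=
    Finset.prod_ne_zero_iff.2 fun j _ => neg_ne_zero.2 (mul_ne_zero (ha3 j) (ha3' j))
  have c5 : ∏ j, (-((a5 + k j) * (a5 - k j))) ≠ 0 :=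
    Finset.prod_ne_zero_iff.2 fun j _ => neg_ne_zero.2 (mul_ne_zero (ha5 j) (ha5' j))
  intro n1 n2 n3 n5
  -- writing `n3 = p + 1` turns backward shifts in `n3` into forward ones
  obtain ⟨p, rfl⟩ : ∃ p, n3 = p + 1 := ⟨n3 - 1, by ring⟩
  have hp : p + 1 + 2 = p + 1 + 1 + 1 := by ring
  simp only [add_sub_cancel_right, hp, hΨ]
  refine ⟨?_, ?_, ?_⟩
  · have h := bracket_relation (-a3 - a1) (-a5 - a1) 0 (a2 - a1) (a3 - a1)
      (Ψ n1 n2 (p + 1) (n5 + 1))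
    simp only [s1, s2, s3, r3, r5, mulFam_scale, momentDet_scale] at h
    refine mul_left_cancel₀ (mul_ne_zero c3 c5) ?_
    linear_combination -h
  · have h := bracket_relation (a3 - a1) (-a5 - a1) 0 (a2 - a1) (-a3 - a1)
      (Ψ n1 n2 (p + 1) (n5 + 1))
    simp only [s1, s2, s3, r3, r5, mulFam_scale, momentDet_scale] at h
    refine mul_left_cancel₀ (mul_ne_zero c3 c5) ?_
    linear_combination -h
  · have h := bracket_relation (-a3 - a1) (-a3 - a1) 0 (a2 - a1) (a3 - a1)
      (Ψ n1 n2 (p + 1 + 1) n5)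
    simp only [s1, s2, s3, r3, mulFam_scale, momentDet_scale] at h
    refine mul_left_cancel₀ (mul_ne_zero c3 c3) ?_
    linear_combination -h
end
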